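/- Let 𝓗 be a D-dimensional complex Hilbert space (D ≥ 1), let μ be the Haar probability measure on the unitary group U(𝓗), and let ψ₀ ∈ 𝓗 be a fixed unit vector. Then ∫_{U(𝓗)} (U|ψ₀⟩⟨ψ₀|U†)^{⊗2} dμ(U) = Π_{Sym²(𝓗)} / binom(D+1, 2), where Π_{Sym²(𝓗)} is the orthogonal projection of 𝓗 ⊗ 𝓗 onto its symmetric subspace (the fixed space of the swap operator F defined by F(x ⊗ y) = y ⊗ x). -/

import Mathlib

/-!
Write `X = U ψ₀` for the random vector and `G a b c d = 𝔼[X_a X̄_c X_b X̄_d]` for its fourth moments.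
Left invariance says that `X` and `V X` have the same law for every unitary `V`, and two kinds of `V`
determine all the moments.

* A diagonal `V` with entry `i` at one index and `1` elsewhere multiplies `G a b c d` by a power of
  `i`, which forces `G a b c d = 0` unless `{a, b} = {c, d}` as multisets (`moment_eq_zero`).
* The square root of the transposition of `j` and `k` turns `𝔼|X_j|⁴` into
  `¼ (𝔼|X_j|⁴ + 𝔼|X_k|⁴ + 4 𝔼|X_j|²|X_k|²)` (`moment_mix`). Together with the same identity for
  `k, j`, this gives `𝔼|X_j|⁴ = 𝔼|X_k|⁴ = 2 𝔼|X_j|²|X_k|²`.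

All moments are thus multiples of one constant `α = 𝔼|X_j|⁴`, and integrating `(∑ |X_a|²)² = 1` gives
`D α + D (D - 1) α / 2 = 1`, i.e. `α = 1 / binom (D + 1) 2`.
-/

open MeasureTheory
open scoped Kronecker

noncomputable section

/-- The rank-one projector `|v⟩⟨v|` as a matrix. -/
def projM {m : Type*} (v : EuclideanSpace ℂ m) : Matrix m m ℂ :=
  fun x y => v x * (starRingEnd ℂ) (v y)

instance matrixMeasurableSpace {m n : Type*} : MeasurableSpace (Matrix m n ℂ) :=
  MeasurableSpace.pi

section Moments

open Matrix ComplexConjugate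

variable {D : ℕ}

/-- The coordinate `(U ψ)_a`, as a function of the unitary `U`. -/
def coordX (ψ : Fin D → ℂ) (a : Fin D) (U : Matrix.unitaryGroup (Fin D) ℂ) : ℂ :=
  ((U : Matrix (Fin D) (Fin D) ℂ) *ᵥ ψ) a

/-- The monomial `X_a X̄_c X_b X̄_d` in the coordinates of a vector. -/
def monom (x : Fin D → ℂ) (a b c d : Fin D) : ℂ := x a * conj (x c) * (x b * conj (x d))

/-- The fourth moment `𝔼[X_a X̄_c X_b X̄_d]` of `X = U ψ`. -/
def moment (μ : Measure (Matrix.unitaryGroup (Fin D) ℂ)) (ψ : Fin D → ℂ) (a b c d : Fin D) : ℂ :=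
  ∫ U : Matrix.unitaryGroup (Fin D) ℂ,
    monom ((U : Matrix (Fin D) (Fin D) ℂ) *ᵥ ψ) a b c d ∂μ

lemma measurable_entry (a b : Fin D) :
    Measurable (fun U : Matrix.unitaryGroup (Fin D) ℂ => (U : Matrix (Fin D) (Fin D) ℂ) a b) :=
  (measurable_pi_apply b).comp ((measurable_pi_apply a).comp measurable_subtype_coe)

lemma measurable_coordX (ψ : Fin D → ℂ) (a : Fin D) : Measurable (coordX ψ a) := by
  unfold coordX
  simp only [mulVec, dotProduct]
  exact Finset.measurable_sum _ fun b _ => (measurable_entry a b).mul_const _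

lemma measurable_conj : Measurable (fun z : ℂ => conj z) :=
  Complex.continuous_conj.measurable

lemma measurable_monom (ψ : Fin D → ℂ) (a b c d : Fin D) :
    Measurable (fun U : Matrix.unitaryGroup (Fin D) ℂ =>
      monom ((U : Matrix (Fin D) (Fin D) ℂ) *ᵥ ψ) a b c d) := by
  have h := measurable_coordX ψ
  exact ((h a).mul (measurable_conj.comp (h c))).mul ((h b).mul (measurable_conj.comp (h d)))

lemma measurable_leftMul (V : Matrix.unitaryGroup (Fin D) ℂ) :
    Measurable (fun U : Matrix.unitaryGroup (Fin D) ℂ => V * U) := by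
  refine Measurable.subtype_mk ?_
  refine measurable_pi_lambda _ fun a => measurable_pi_lambda _ fun b => ?_
  simp only [mul_apply]
  exact Finset.measurable_sum _ fun c _ => (measurable_entry c b).const_mul _

lemma sum_mulVec_conj {ψ : Fin D → ℂ} (hψ : ∑ a, ψ a * conj (ψ a) = 1)
    (U : Matrix.unitaryGroup (Fin D) ℂ) :
    ∑ a, ((U : Matrix (Fin D) (Fin D) ℂ) *ᵥ ψ) a *
      conj (((U : Matrix (Fin D) (Fin D) ℂ) *ᵥ ψ) a) = 1 := by
  have h : ((U : Matrix (Fin D) (Fin D) ℂ) *ᵥ ψ) ⬝ᵥ star ((U : Matrix (Fin D) (Fin D) ℂ) *ᵥ ψ)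
      = ψ ⬝ᵥ star ψ := by
    rw [star_mulVec, dotProduct_comm, ← dotProduct_mulVec, mulVec_mulVec,
      ← star_eq_conjTranspose, UnitaryGroup.star_mul_self, one_mulVec, dotProduct_comm]
  exact h.trans hψ

lemma norm_mulVec_le {ψ : Fin D → ℂ} (hψ : ∑ a, ψ a * conj (ψ a) = 1)
    (U : Matrix.unitaryGroup (Fin D) ℂ) (a : Fin D) :
    ‖((U : Matrix (Fin D) (Fin D) ℂ) *ᵥ ψ) a‖ ≤ 1 := by
  have h := sum_mulVec_conj hψ U
  simp only [Complex.mul_conj'] at h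
  norm_cast at h
  have h2 := Finset.single_le_sum (f := fun a => ‖((U : Matrix (Fin D) (Fin D) ℂ) *ᵥ ψ) a‖ ^ 2)
    (fun i _ => by positivity) (Finset.mem_univ a)
  simp only [h] at h2
  exact (sq_le_one_iff₀ (norm_nonneg _)).1 h2

variable {μ : Measure (Matrix.unitaryGroup (Fin D) ℂ)}

lemma integrable_monom [IsProbabilityMeasure μ] {ψ : Fin D → ℂ} (hψ : ∑ a, ψ a * conj (ψ a) = 1) (a b c d : Fin D) :
    Integrable (fun U : Matrix.unitaryGroup (Fin D) ℂ =>
      monom ((U : Matrix (Fin D) (Fin D) ℂ) *ᵥ ψ) a b c d) μ := by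
  refine Integrable.of_bound (measurable_monom ψ a b c d).aestronglyMeasurable 1
    (Filter.Eventually.of_forall fun U => ?_)
  have h := norm_mulVec_le hψ U
  simp only [monom, norm_mul, RCLike.norm_conj]
  exact mul_le_one₀ (mul_le_one₀ (h a) (norm_nonneg _) (h c)) (by positivity)
    (mul_le_one₀ (h b) (norm_nonneg _) (h d))

/-- `X` and `V X` have the same fourth moments. -/
lemma moment_invariant
    (hinv : ∀ V : Matrix.unitaryGroup (Fin D) ℂ, Measure.map (fun U => V * U) μ = μ)
    (ψ : Fin D → ℂ) (V : Matrix.unitaryGroup (Fin D) ℂ) (a b c d : Fin D) :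
    moment μ ψ a b c d = ∫ U : Matrix.unitaryGroup (Fin D) ℂ,
      monom ((V : Matrix (Fin D) (Fin D) ℂ) *ᵥ ((U : Matrix (Fin D) (Fin D) ℂ) *ᵥ ψ)) a b c d ∂μ := by
  conv_lhs => rw [moment, ← hinv V]
  rw [integral_map (measurable_leftMul V).aemeasurable
    (measurable_monom ψ a b c d).aestronglyMeasurable]
  simp [mulVec_mulVec]

/-- The diagonal unitary with entry `i` at `k` and `1` elsewhere. -/
def phase (k : Fin D) : Matrix.unitaryGroup (Fin D) ℂ :=
  ⟨diagonal fun x => if x = k then Complex.I else 1, by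
    rw [mem_unitaryGroup_iff, star_eq_conjTranspose, diagonal_conjTranspose, diagonal_mul_diagonal,
      ← diagonal_one]
    congr 1
    funext x
    by_cases h : x = k <;> simp [h]⟩

lemma moment_phase
    (hinv : ∀ V : Matrix.unitaryGroup (Fin D) ℂ, Measure.map (fun U => V * U) μ = μ)
    (ψ : Fin D → ℂ) (k a b c d : Fin D) :
    moment μ ψ a b c d =
      monom (fun x => if x = k then Complex.I else 1) a b c d * moment μ ψ a b c d := by
  conv_lhs => rw [moment_invariant hinv ψ (phase k)]
  rw [moment, ← integral_const_mul]
  congr 1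
  funext U
  simp only [phase, monom, mulVec_diagonal, map_mul]
  ring

lemma moment_eq_zero
    (hinv : ∀ V : Matrix.unitaryGroup (Fin D) ℂ, Measure.map (fun U => V * U) μ = μ)
    (ψ : Fin D → ℂ) (a b c d : Fin D) (h1 : ¬ (a = c ∧ b = d)) (h2 : ¬ (a = d ∧ b = c)) :
    moment μ ψ a b c d = 0 := by
  -- the phase is put at an index whose multiplicities in `{a, b}` and `{c, d}` differ
  suffices h : ∃ k : Fin D, monom (fun x => if x = k then Complex.I else 1) a b c d ≠ 1 by
    obtain ⟨k, hk⟩ := h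
    have h3 := moment_phase hinv ψ k a b c d
    by_contra h0
    exact hk (mul_right_cancel₀ h0 (by rw [one_mul]; exact h3.symm))
  have e1 : Complex.I ≠ 1 := fun h => by simpa using congrArg Complex.im h
  have e2 : (-1 : ℂ) ≠ 1 := by norm_num
  by_cases hac : a = c
  · subst hac
    have hbd : d ≠ b := fun h => h1 ⟨rfl, h.symm⟩
    refine ⟨b, ?_⟩
    by_cases hab : a = b <;> simp [monom, hab, hbd, e1]
  · by_cases had : a = d
    · subst had
      have hbc : c ≠ b := fun h => h2 ⟨rfl, h.symm⟩
      refine ⟨b, ?_⟩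
      by_cases hab : a = b <;> simp [monom, hab, hbc, e1]
    · refine ⟨a, ?_⟩
      have hca : c ≠ a := fun h => hac h.symm
      have hda : d ≠ a := fun h => had h.symm
      by_cases hab : b = a <;> simp [monom, hab, hca, hda, e1, e2]

/-- The square root `1 + (i - 1)/2 • w wᵀ`, `w = e_j - e_k`, of the transposition of `j` and `k`. -/
def sqrtSwap (j k : Fin D) (hjk : j ≠ k) : Matrix.unitaryGroup (Fin D) ℂ :=
  ⟨1 + ((Complex.I - 1) / 2) •
      vecMulVec (Pi.single j 1 - Pi.single k 1) (Pi.single j 1 - Pi.single k 1), by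
    set w : Fin D → ℂ := Pi.single j 1 - Pi.single k 1 with hw
    have hs : star w = w := by
      funext x
      simp only [hw, Pi.star_apply, Pi.sub_apply, Pi.single_apply]
      split_ifs <;> simp
    have hww : w ⬝ᵥ w = 2 := by
      simp [hw, hjk, hjk.symm]
      norm_num
    have hN : (vecMulVec w w)ᴴ = vecMulVec w w := by
      rw [conjTranspose_vecMulVec, hs]
    have hNN : vecMulVec w w * vecMulVec w w = (2 : ℂ) • vecMulVec w w := by
      rw [vecMulVec_mul_vecMulVec, hww]
      ext x y
      simp [vecMulVec_apply, mul_left_comm]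
    rw [mem_unitaryGroup_iff, star_eq_conjTranspose, conjTranspose_add, conjTranspose_smul, hN,
      conjTranspose_one, add_mul, mul_add, mul_add, smul_mul_smul_comm, hNN, one_mul, one_mul,
      mul_one, smul_smul, add_assoc, ← add_smul, ← add_smul]
    have hc : star ((Complex.I - 1) / 2) + ((Complex.I - 1) / 2 +
        (Complex.I - 1) / 2 * star ((Complex.I - 1) / 2) * 2) = 0 := by
      simp
      linear_combination (-1 / 2 : ℂ) * Complex.I_mul_I
    rw [hc, zero_smul, add_zero]⟩

lemma sqrtSwap_mulVec (j k : Fin D) (hjk : j ≠ k) (x : Fin D → ℂ) :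
    ((sqrtSwap j k hjk : Matrix (Fin D) (Fin D) ℂ) *ᵥ x) j =
      x j + (Complex.I - 1) / 2 * (x j - x k) := by
  simp [sqrtSwap, add_mulVec, smul_mulVec, vecMulVec_mulVec, sub_dotProduct, hjk]

lemma moment_mix [IsProbabilityMeasure μ]
    (hinv : ∀ V : Matrix.unitaryGroup (Fin D) ℂ, Measure.map (fun U => V * U) μ = μ)
    {ψ : Fin D → ℂ} (hψ : ∑ a, ψ a * conj (ψ a) = 1) (j k : Fin D) (hjk : j ≠ k) :
    moment μ ψ j j j j =
      1 / 4 * (moment μ ψ j j j j + moment μ ψ k k k k + 4 * moment μ ψ j k j k) := by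
  have hkj := hjk.symm
  have z1 : moment μ ψ j j j k = 0 := moment_eq_zero hinv ψ _ _ _ _ (by simp [hjk]) (by simp [hjk])
  have z2 : moment μ ψ j k j j = 0 := moment_eq_zero hinv ψ _ _ _ _ (by simp [hkj]) (by simp [hkj])
  have z3 : moment μ ψ k j k k = 0 := moment_eq_zero hinv ψ _ _ _ _ (by simp [hjk]) (by simp [hjk])
  have z4 : moment μ ψ k k k j = 0 := moment_eq_zero hinv ψ _ _ _ _ (by simp [hkj]) (by simp [hkj])
  have z5 : moment μ ψ j j k k = 0 := moment_eq_zero hinv ψ _ _ _ _ (by simp [hjk]) (by simp [hjk])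
  have z6 : moment μ ψ k k j j = 0 := moment_eq_zero hinv ψ _ _ _ _ (by simp [hkj]) (by simp [hkj])
  have expand : ∀ x : Fin D → ℂ,
      monom ((sqrtSwap j k hjk : Matrix (Fin D) (Fin D) ℂ) *ᵥ x) j j j j =
      1 / 4 * monom x j j j j + 1 / 4 * monom x k k k k + monom x j k j k
        + Complex.I / 2 * monom x j j j k + -Complex.I / 2 * monom x j k j j
        + Complex.I / 2 * monom x k j k k + -Complex.I / 2 * monom x k k k j
        + -1 / 4 * monom x j j k k + -1 / 4 * monom x k k j j := by
    intro x
    simp only [monom, sqrtSwap_mulVec, map_add, map_mul, map_sub, map_div₀, map_one, Complex.conj_I,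
      map_ofNat]
    generalize x j = p, x k = q, conj (x j) = r, conj (x k) = s
    -- the squared modulus of `(1 + i)/2 * p + (1 - i)/2 * q`
    have hsq : (p + (Complex.I - 1) / 2 * (p - q)) * (r + (-Complex.I - 1) / 2 * (r - s))
        = 1 / 2 * (p * r + q * s + Complex.I * (p * s) - Complex.I * (q * r)) := by
      linear_combination (-1 / 4 * (p - q) * (r - s)) * Complex.I_mul_I
    rw [hsq]
    linear_combination (1 / 4 * (p * s - q * r) ^ 2) * Complex.I_mul_I
  have I0 := fun a b c d => integrable_monom (μ := μ) hψ a b c d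
  have I1 := fun (t : ℂ) a b c d => (I0 a b c d).const_mul t
  conv_lhs => rw [moment_invariant hinv ψ (sqrtSwap j k hjk)]
  simp only [expand]
  iterate 8 rw [integral_add (by fun_prop) (by fun_prop)]
  simp only [integral_const_mul]
  simp only [moment] at *
  rw [z1, z2, z3, z4, z5, z6]
  ring

lemma sum_moment [IsProbabilityMeasure μ] {ψ : Fin D → ℂ} (hψ : ∑ a, ψ a * conj (ψ a) = 1) :
    ∑ a, ∑ b, moment μ ψ a b a b = 1 := by
  simp only [moment]
  have h : ∀ U : Matrix.unitaryGroup (Fin D) ℂ,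
      ∑ a, ∑ b, monom ((U : Matrix (Fin D) (Fin D) ℂ) *ᵥ ψ) a b a b = 1 := fun U => by
    simp only [monom]
    rw [← Finset.sum_mul_sum, sum_mulVec_conj hψ U, one_mul]
  calc _ = ∫ U : Matrix.unitaryGroup (Fin D) ℂ,
        ∑ a, ∑ b, monom ((U : Matrix (Fin D) (Fin D) ℂ) *ᵥ ψ) a b a b ∂μ := by
        rw [integral_finsetSum _ fun a _ =>
          integrable_finsetSum _ fun b _ => integrable_monom hψ a b a b]
        refine Finset.sum_congr rfl fun a _ => ?_
        rw [integral_finsetSum _ fun b _ => integrable_monom hψ a b a b]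
    _ = 1 := by simp [h]

/-- The values of `𝔼|X_a|²|X_b|²`: they are all `𝔼|X_a|⁴` or half of it, and their sum is `1`. -/
lemma moment_diag [IsProbabilityMeasure μ]
    (hinv : ∀ V : Matrix.unitaryGroup (Fin D) ℂ, Measure.map (fun U => V * U) μ = μ)
    {ψ : Fin D → ℂ} (hψ : ∑ a, ψ a * conj (ψ a) = 1) (a b : Fin D) :
    moment μ ψ a b a b = (1 / ((D + 1).choose 2 : ℂ)) * if a = b then 1 else 1 / 2 := by
  have hcomm : ∀ j k, moment μ ψ j k j k = moment μ ψ k j k j := fun j k => by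
    simp only [moment, monom, mul_comm]
  have hrel : ∀ j k, j ≠ k → moment μ ψ j j j j = moment μ ψ k k k k ∧
      moment μ ψ j k j k = moment μ ψ j j j j / 2 := fun j k hjk => by
    have h1 := moment_mix hinv hψ j k hjk
    have h2 := moment_mix hinv hψ k j hjk.symm
    rw [hcomm k j] at h2
    constructor
    · linear_combination h1 - h2
    · linear_combination (-3 / 4 : ℂ) * h1 - (1 / 4 : ℂ) * h2
  set α := moment μ ψ a a a a with hα
  have hall : ∀ j k, moment μ ψ j k j k = α * if j = k then 1 else 1 / 2 := fun j k => by
    have hj : moment μ ψ j j j j = α := by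
      by_cases h : j = a
      · rw [h]
      · exact (hrel j a h).1
    by_cases h : j = k
    · subst h
      simp [hj]
    · rw [(hrel j k h).2, hj, if_neg h]
      ring
  have hsum := sum_moment (μ := μ) hψ
  have hite : ∀ j k : Fin D, (if j = k then (1 : ℂ) else 1 / 2) = 1 / 2 + if j = k then 1 / 2 else 0 :=
    fun j k => by split_ifs <;> norm_num
  simp only [hall, hite, ← Finset.mul_sum, Finset.sum_add_distrib, Finset.sum_ite_eq,
    Finset.mem_univ, if_true, Finset.sum_const, Finset.card_univ, Fintype.card_fin,
    nsmul_eq_mul] at hsum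
  have hch : ((D + 1).choose 2 : ℂ) = (D + 1) * D / 2 := by
    rw [Nat.cast_choose_two]
    push_cast
    ring
  have hα1 : α * ((D + 1).choose 2 : ℂ) = 1 := by
    rw [hch]
    linear_combination hsum
  rw [hall a b, eq_one_div_of_mul_eq_one_left hα1]

end Moments

/-- Let `𝓗 = ℂ^D` (`D ≥ 1`), let `μ` be the Haar probability measure on the
unitary group `U(𝓗)` (i.e. the unique left-invariant Borel probability measure), and let `ψ₀`
be a fixed unit vector.  Then
`∫ (U|ψ₀⟩⟨ψ₀|U†)^{⊗2} dμ(U) = Π_{Sym²(𝓗)} / binom (D+1) 2`,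
where `Π_{Sym²(𝓗)} = (1/2)(I ⊗ I + F)` is the orthogonal projection onto the symmetric
subspace, `F` being the swap operator.  (Stated entrywise.) -/
theorem statement0 (D : ℕ) (hD : 1 ≤ D)
    (μ : Measure (Matrix.unitaryGroup (Fin D) ℂ)) [IsProbabilityMeasure μ]
    (hinv : ∀ V : Matrix.unitaryGroup (Fin D) ℂ,
      Measure.map (fun U => V * U) μ = μ)
    (ψ₀ : EuclideanSpace ℂ (Fin D)) (hψ₀ : ‖ψ₀‖ = 1)
    (F : Matrix (Fin D × Fin D) (Fin D × Fin D) ℂ)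
    (hF : ∀ x y, F x y = if x.1 = y.2 ∧ x.2 = y.1 then 1 else 0)
    (P : Matrix (Fin D × Fin D) (Fin D × Fin D) ℂ)
    (hP : P = (2 : ℂ)⁻¹ • (1 + F)) :
    ∀ p q : Fin D × Fin D,
      (∫ U : Matrix.unitaryGroup (Fin D) ℂ,
        ((projM (Matrix.toEuclideanCLM (𝕜 := ℂ) (U : Matrix (Fin D) (Fin D) ℂ) ψ₀)) ⊗ₖ
          (projM (Matrix.toEuclideanCLM (𝕜 := ℂ) (U : Matrix (Fin D) (Fin D) ℂ) ψ₀))) p q ∂μ)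
      = P p q / (((D + 1).choose 2 : ℂ)) := by
  have hψ : ∑ a, ψ₀ a * (starRingEnd ℂ) (ψ₀ a) = 1 := by
    have h := EuclideanSpace.norm_sq_eq ψ₀
    rw [hψ₀, one_pow] at h
    simp only [Complex.mul_conj']
    exact_mod_cast h.symm
  rintro ⟨a, b⟩ ⟨c, d⟩
  have hL : (∫ U : Matrix.unitaryGroup (Fin D) ℂ,
        ((projM (Matrix.toEuclideanCLM (𝕜 := ℂ) (U : Matrix (Fin D) (Fin D) ℂ) ψ₀)) ⊗ₖ
          (projM (Matrix.toEuclideanCLM (𝕜 := ℂ) (U : Matrix (Fin D) (Fin D) ℂ) ψ₀)))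
            (a, b) (c, d) ∂μ) = moment μ (WithLp.ofLp ψ₀) a b c d := rfl
  rw [hL, hP]
  simp only [Matrix.smul_apply, Matrix.add_apply, Matrix.one_apply, hF, Prod.mk.injEq, smul_eq_mul]
  by_cases h1 : a = c ∧ b = d
  · obtain ⟨rfl, rfl⟩ := h1
    rw [moment_diag hinv hψ]
    by_cases h : a = b
    · subst h
      norm_num
    · simp [h, Ne.symm h]
      ring
  · by_cases h2 : a = d ∧ b = c
    · obtain ⟨rfl, rfl⟩ := h2
      have hab : a ≠ b := fun h => h1 ⟨h, h.symm⟩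
      have hswap : moment μ (WithLp.ofLp ψ₀) a b b a = moment μ (WithLp.ofLp ψ₀) a b a b := by
        simp only [moment, monom]
        congr 1
        funext U
        ring
      rw [hswap, moment_diag hinv hψ]
      simp [hab]
      ring
    · rw [moment_eq_zero hinv _ a b c d h1 h2]
      simp [h1, h2]
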